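/- Let X, Y, A, Z be types with deterministic MOB-MOMDP dynamics fX : X → A → X, fY : X → Y → X → Y, step (x, y) a := (fX x a, fY x y (fX x a)), and observation map obs (x, y) := (x, zobs x y) ∈ X × Z for some zobs : X → Y → Z. Fix a reward function R : X × Y → ℝ, a discount γ : ℝ, a horizon N : ℕ, and an initial state s₀ ∈ X × Y. Then the set of N-step discounted returns { ∑_{n < N} γ^n · R (s_n^π) : π a flat history policy List (X × Z) → A } equals the set { ∑_{n < N} γ^n · R (s_n^{(πT, πX)}) : (πT, πX) a hierarchical policy pair }, where s_n^π and s_n^{(πT, πX)} denote the respective closed-loop state trajectories from s₀. In particular, the optimal achievable return over flat history policies equals the optimal achievable return over hierarchical HILMO policies. -/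

import Mathlib

/-- The fully observable component recorded in the last observation of a
history (with a default value for the empty history). -/
def lastX {X Z : Type*} [Inhabited X] (h : List (X × Z)) : X :=
  (h.getLast?.map Prod.fst).getD default

/-- Closed-loop run of a flat history policy `π`: at time `t` it returns the
pair (current state `s_t`, current observation history `h_t`), where
`h₀ = [obs s₀]`, `a_t = π h_t`, `s_{t+1} = step s_t a_t`, and
`h_{t+1} = h_t ++ [obs s_{t+1}]`. -/
def flatRun {X Y A Z : Type*} (step : X × Y → A → X × Y) (obs : X × Y → X × Z)
    (π : List (X × Z) → A) (s₀ : X × Y) : ℕ → (X × Y) × List (X × Z)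
  | 0 => (s₀, [obs s₀])
  | n + 1 =>
    let p := flatRun step obs π s₀ n
    let s' := step p.1 (π p.2)
    (s', p.2 ++ [obs s'])

/-!
An action changes the state only through the next observable component, so an action may be
replaced by that component as a goal: a flat policy `π` becomes the top-level policy
`h ↦ fX x (π h)`, where `x` is the last observable component of `h`. A bottom level that achieves
every achievable goal may select a different action from `π`, but one with the same effect, so the
two closed-loop runs agree. Conversely, a hierarchical policy is a particular flat policy.
-/

section HierarchicalPolicies

variable {X Y A Z G : Type*} {step : X × Y → A → X × Y} {obs : X × Y → X × Z}

theorem flatRun_congr {π π' : List (X × Z) → A} {s₀ : X × Y}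
    (hstep : ∀ t, step (flatRun step obs π s₀ t).1 (π' (flatRun step obs π s₀ t).2) =
      step (flatRun step obs π s₀ t).1 (π (flatRun step obs π s₀ t).2)) :
    flatRun step obs π' s₀ = flatRun step obs π s₀ := by
  funext t
  induction t with
  | zero => rfl
  | succ t ih => simp only [flatRun, ih, hstep]

variable [Inhabited X]

theorem lastX_append_singleton (h : List (X × Z)) (o : X × Z) : lastX (h ++ [o]) = o.1 := by
  simp [lastX]

theorem lastX_flatRun (hobs : ∀ s, (obs s).1 = s.1) (π : List (X × Z) → A) (s₀ : X × Y) (t : ℕ) :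
    lastX (flatRun step obs π s₀ t).2 = (flatRun step obs π s₀ t).1.1 := by
  cases t with
  | zero => exact hobs s₀
  | succ t => exact (lastX_append_singleton _ _).trans (hobs _)

/-- The flat policy played by a hierarchical (HILMO) pair: the top level `πT` chooses a goal from
the history, and the bottom level `πX` an action from the last observable component and that goal.
Goals live in an arbitrary type `G`; in the paper `G = X`. -/
def hierarchicalPolicy (πT : List (X × Z) → G) (πX : X → G → A) (h : List (X × Z)) : A :=
  πX (lastX h) (πT h)

/-- The top-level policy that sets as goal the outcome `f x a`, at the last observable component
`x`, of the action `a` that the flat policy `π` would take. In the paper `f` is the dynamics `fX`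
of the observable component. -/
def outcomePolicy (f : X → A → G) (π : List (X × Z) → A) (h : List (X × Z)) : G :=
  f (lastX h) (π h)

theorem flatRun_hierarchicalPolicy_outcomePolicy {f : X → A → G} {πX : X → G → A}
    (hobs : ∀ s, (obs s).1 = s.1)
    (hstep : ∀ s a b, f s.1 a = f s.1 b → step s a = step s b)
    (hπX : ∀ x a, f x (πX x (f x a)) = f x a) (π : List (X × Z) → A) (s₀ : X × Y) :
    flatRun step obs (hierarchicalPolicy (outcomePolicy f π) πX) s₀ =
      flatRun step obs π s₀ := by
  refine flatRun_congr fun t ↦ hstep _ _ _ ?_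
  simp only [hierarchicalPolicy, outcomePolicy, lastX_flatRun hobs, hπX]

theorem exists_flatRun_hierarchicalPolicy_eq (f : X → A → G)
    (hobs : ∀ s, (obs s).1 = s.1)
    (hstep : ∀ s a b, f s.1 a = f s.1 b → step s a = step s b)
    (π : List (X × Z) → A) (s₀ : X × Y) :
    ∃ (πT : List (X × Z) → G) (πX : X → G → A),
      flatRun step obs (hierarchicalPolicy πT πX) s₀ = flatRun step obs π s₀ := by
  have : Nonempty A := ⟨π []⟩
  have hinv (x : X) (a : A) : f x (Function.invFun (f x) (f x a)) = f x a :=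
    Function.invFun_eq ⟨a, rfl⟩
  exact ⟨outcomePolicy f π, fun x ↦ Function.invFun (f x),
    flatRun_hierarchicalPolicy_outcomePolicy hobs hstep hinv π s₀⟩

theorem hilmo_return_sets_eq_deterministic_general {V : Type*} (f : X → A → G)
    (hobs : ∀ s, (obs s).1 = s.1)
    (hstep : ∀ s a b, f s.1 a = f s.1 b → step s a = step s b)
    (J : (ℕ → (X × Y) × List (X × Z)) → V) (s₀ : X × Y) :
    {v : V | ∃ π : List (X × Z) → A, v = J (flatRun step obs π s₀)} =
      {v : V | ∃ (πT : List (X × Z) → G) (πX : X → G → A),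
        v = J (flatRun step obs (hierarchicalPolicy πT πX) s₀)} := by
  refine Set.Subset.antisymm ?_ ?_
  · rintro _ ⟨π, rfl⟩
    obtain ⟨πT, πX, hrun⟩ := exists_flatRun_hierarchicalPolicy_eq f hobs hstep π s₀
    exact ⟨πT, πX, by rw [hrun]⟩
  · rintro _ ⟨πT, πX, rfl⟩
    exact ⟨hierarchicalPolicy πT πX, rfl⟩

end HierarchicalPolicies

/-- In a deterministic MOB-MOMDP, the set of achievable N-step discounted
returns of flat history policies equals the set of achievable N-step
discounted returns of hierarchical HILMO policy pairs (whose closed-loop run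
plays `a_t = πX x_t (πT h_t)` where `x_t` is the first component of the last
observation in `h_t`); in particular the optimal achievable returns
coincide. -/
theorem hilmo_return_sets_eq_deterministic {X Y A Z : Type*} [Inhabited X]
    (fX : X → A → X) (fY : X → Y → X → Y) (zobs : X → Y → Z)
    (step : X × Y → A → X × Y)
    (hstep : ∀ (x : X) (y : Y) (a : A), step (x, y) a = (fX x a, fY x y (fX x a)))
    (obs : X × Y → X × Z)
    (hobs : ∀ (x : X) (y : Y), obs (x, y) = (x, zobs x y))
    (R : X × Y → ℝ) (γ : ℝ) (N : ℕ) (s₀ : X × Y) :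
    {v : ℝ | ∃ π : List (X × Z) → A,
        v = ∑ t ∈ Finset.range N, γ ^ t * R (flatRun step obs π s₀ t).1}
      = {v : ℝ | ∃ (πT : List (X × Z) → X) (πX : X → X → A),
        v = ∑ t ∈ Finset.range N,
              γ ^ t * R (flatRun step obs (fun h => πX (lastX h) (πT h)) s₀ t).1} :=
  hilmo_return_sets_eq_deterministic_general fX (fun s ↦ by rw [hobs])
    (fun s a b hab ↦ by rw [hstep, hstep, hab])
    (fun run ↦ ∑ t ∈ Finset.range N, γ ^ t * R (run t).1) s₀
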